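/- Let r and n be integers with 2 ≤ r < n, and let G be a K_{r+1}-saturated simple graph on n vertices. Let λ₁ denote the largest eigenvalue of the real adjacency matrix of G. Then λ₁ ≥ sqrt( ((n-1)²(r-1) + (r-1)²(n-r+1)) / n ). -/

import Mathlib

open SimpleGraph

/-- A graph `G` is `K_r`-saturated if it contains no `r`-clique, but adding any edge
between distinct non-adjacent vertices creates an `r`-clique. -/
def IsKSaturated {V : Type*} (r : ℕ) (G : SimpleGraph V) : Prop :=
  G.CliqueFree r ∧ ∀ u v : V, u ≠ v → ¬ G.Adj u v →
    ¬ (G ⊔ SimpleGraph.fromEdgeSet {s(u, v)}).CliqueFree r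

/-!
As the adjacency matrix `A` has nonnegative entries, `‖A x‖ ≤ λ₁ ‖x‖` for all `x`. For the all-ones
vector this reads `∑ d(v)² ≤ λ₁² n`, so it is enough to bound `∑ d(v)²` from below.

Put `k = r - 1`. By saturation every non-edge `e` has a `k`-clique `Q e` of common neighbours of its
ends, and the only non-edge inside `e ∪ Q e` is `e` itself. Bollobás' set-pair inequality therefore
bounds the number of non-edges `e` with `e ∪ Q e ⊆ W` by `C(|W| - k, 2)`. With `W = V` this bounds
the number `m` of all non-edges. With `W` the neighbourhood of `w`, and `w` removed from `Q e`, it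
bounds the number of `e` with `w ∈ Q e` by `C(d(w) - k + 1, 2)`. The latter numbers add up to `k m`,
which relates `m`, `∑ d(v)` and `∑ d(v)²`; as `∑ d(v) = n (n - 1) - 2 m`, the result is a lower
bound for `∑ d(v)²` that does not increase with `m`.
-/

section SetPairs

open Finset

variable {ι α : Type*}

lemma sum_inv_choose_card_erase [DecidableEq α] {X A B : Finset α} (hA : A ⊆ X) (hB : B ⊆ X)
    (hAB : Disjoint A B) (hBne : B.Nonempty) :
    ∑ x ∈ X \ A, ((#A + #(B.erase x)).choose #A : ℚ)⁻¹ = #X * ((#A + #B).choose #A : ℚ)⁻¹ := by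
  have hBsub : B ⊆ X \ A := subset_sdiff.2 ⟨hB, hAB.symm⟩
  have sum_outside : ∑ x ∈ (X \ A) \ B, ((#A + #(B.erase x)).choose #A : ℚ)⁻¹
      = (#X - #A - #B) * ((#A + #B).choose #A : ℚ)⁻¹ := by
    rw [← cast_card_sdiff hA, ← cast_card_sdiff hBsub, ← nsmul_eq_mul, ← sum_const]
    exact sum_congr rfl fun x hx => by rw [erase_eq_of_notMem (mem_sdiff.1 hx).2]
  have sum_inside : ∑ x ∈ B, ((#A + #(B.erase x)).choose #A : ℚ)⁻¹
      = (#A + #B) * ((#A + #B).choose #A : ℚ)⁻¹ := by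
    obtain ⟨b, hb⟩ : ∃ b, #B = b + 1 := Nat.exists_eq_succ_of_ne_zero hBne.card_ne_zero
    have choose_step : ((#A + b).choose #A : ℚ) * (#A + b + 1)
        = (#A + b + 1).choose #A * (b + 1) := by
      have := Nat.choose_mul_succ_eq (#A + b) #A
      rw [add_assoc (#A), Nat.add_sub_cancel_left, ← add_assoc] at this
      exact_mod_cast this
    have h₀ : ((#A + b).choose #A : ℚ) ≠ 0 := mod_cast (Nat.choose_pos (by lia)).ne'
    have h₁ : ((#A + b + 1).choose #A : ℚ) ≠ 0 := mod_cast (Nat.choose_pos (by lia)).ne'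
    rw [sum_congr rfl fun x hx => by rw [card_erase_of_mem hx], sum_const, nsmul_eq_mul, hb,
      Nat.add_sub_cancel, ← add_assoc]
    push_cast
    field_simp
    linarith
  rw [← sum_sdiff hBsub, sum_outside, sum_inside]
  ring

lemma card_mul_sum_inv_choose [DecidableEq α] {F : Finset ι} {X : Finset α} {A B : ι → Finset α}
    (hA : ∀ i ∈ F, A i ⊆ X) (hB : ∀ i ∈ F, B i ⊆ X) (hAB : ∀ i ∈ F, Disjoint (A i) (B i))
    (hBne : ∀ i ∈ F, (B i).Nonempty) :
    #X * ∑ i ∈ F, ((#(A i) + #(B i)).choose #(A i) : ℚ)⁻¹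
      = ∑ x ∈ X, ∑ i ∈ F with x ∉ A i,
          ((#(A i) + #((B i).erase x)).choose #(A i) : ℚ)⁻¹ := by
  rw [mul_sum, sum_congr rfl fun i hi =>
    (sum_inv_choose_card_erase (hA i hi) (hB i hi) (hAB i hi) (hBne i hi)).symm]
  exact sum_comm' fun i x => by simp only [mem_sdiff, mem_filter]; tauto

/-- Bollobás' set-pair inequality. Induction on the ground set: restricting to the pairs
with `x ∉ A i` and deleting `x` from every `B i` keeps the hypotheses, and averaging over `x`
reproduces the original sum. -/
theorem sum_inv_choose_card_le_one {F : Finset ι} {A B : ι → Finset α}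
    (hdisj : ∀ i ∈ F, Disjoint (A i) (B i))
    (hcross : (F : Set ι).Pairwise fun i j => ¬ Disjoint (A i) (B j)) :
    ∑ i ∈ F, ((#(A i) + #(B i)).choose #(A i) : ℚ)⁻¹ ≤ 1 := by
  classical
  induction hX : F.biUnion (fun i => A i ∪ B i) using Finset.strongInduction
    generalizing F B with
  | H X ih =>
  have hsub : ∀ i ∈ F, A i ⊆ X ∧ B i ⊆ X := fun i hi =>
    union_subset_iff.1 (hX ▸ subset_biUnion_of_mem (fun i => A i ∪ B i) hi)
  obtain rfl | ⟨i₀, hi₀⟩ := F.eq_empty_or_nonempty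
  · simp
  by_cases hempty : ∃ i ∈ F, B i = ∅
  · obtain ⟨i, hi, hBi⟩ := hempty
    have hF : F = {i} := eq_singleton_iff_unique_mem.2
      ⟨hi, fun j hj => by_contra fun hji => hcross hj hi hji (by simp [hBi])⟩
    simp [hF, hBi]
  have hBne : ∀ i ∈ F, (B i).Nonempty := fun i hi =>
    nonempty_iff_ne_empty.2 fun h => hempty ⟨i, hi, h⟩
  have sum_link_le_one : ∀ x ∈ X,
      ∑ i ∈ F with x ∉ A i, ((#(A i) + #((B i).erase x)).choose #(A i) : ℚ)⁻¹ ≤ 1 := fun x hx => by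
    refine ih _ (LE.le.trans_ssubset ?_ (erase_ssubset hx))
      (fun i hi => (hdisj i (mem_filter.1 hi).1).mono_right (erase_subset _ _)) ?_ rfl
    · refine biUnion_subset.2 fun i hi => ?_
      obtain ⟨hiF, hxA⟩ := mem_filter.1 hi
      exact union_subset (subset_erase.2 ⟨(hsub i hiF).1, hxA⟩)
        (erase_subset_erase x (hsub i hiF).2)
    · intro i hi j hj hij hd
      obtain ⟨hiF, hxA⟩ := mem_filter.1 hi
      refine hcross hiF (mem_filter.1 hj).1 hij ?_
      rwa [← disjoint_erase_comm, erase_eq_of_notMem hxA] at hd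
  have hXpos : (0 : ℚ) < #X :=
    mod_cast card_pos.2 ((hBne i₀ hi₀).mono (hsub i₀ hi₀).2)
  refine le_of_mul_le_mul_left ?_ hXpos
  calc #X * ∑ i ∈ F, ((#(A i) + #(B i)).choose #(A i) : ℚ)⁻¹
      = ∑ x ∈ X, ∑ i ∈ F with x ∉ A i,
          ((#(A i) + #((B i).erase x)).choose #(A i) : ℚ)⁻¹ :=
        card_mul_sum_inv_choose (fun i hi => (hsub i hi).1) (fun i hi => (hsub i hi).2) hdisj hBne
    _ ≤ ∑ _x ∈ X, 1 := sum_le_sum sum_link_le_one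
    _ = #X * 1 := by simp

theorem card_le_choose_of_subset_union_imp_eq [DecidableEq α] {F : Finset ι} {W : Finset α}
    {A Q : ι → Finset α} {a q : ℕ} (hA : ∀ i ∈ F, #(A i) = a) (hQ : ∀ i ∈ F, #(Q i) = q)
    (hdisj : ∀ i ∈ F, Disjoint (A i) (Q i)) (hW : ∀ i ∈ F, A i ∪ Q i ⊆ W)
    (heq : ∀ i ∈ F, ∀ j ∈ F, A i ⊆ A j ∪ Q j → i = j) :
    #F ≤ (#W - q).choose a := by
  obtain rfl | ⟨i₀, hi₀⟩ := F.eq_empty_or_nonempty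
  · simp
  have card_union : ∀ i ∈ F, #(A i ∪ Q i) = a + q := fun i hi => by
    rw [card_union_of_disjoint (hdisj i hi), hA i hi, hQ i hi]
  have le_card : a + q ≤ #W := card_union i₀ hi₀ ▸ card_le_card (hW i₀ hi₀)
  have card_add : ∀ i ∈ F, #(A i) + #(W \ (A i ∪ Q i)) = #W - q := fun i hi => by
    rw [card_sdiff_of_subset (hW i hi), card_union i hi, hA i hi]
    lia
  have sum_le : ∑ i ∈ F, ((#(A i) + #(W \ (A i ∪ Q i))).choose #(A i) : ℚ)⁻¹ ≤ 1 := by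
    refine sum_inv_choose_card_le_one
      (fun i _ => disjoint_sdiff.mono_left subset_union_left) fun i hi j hj hij hd => ?_
    refine hij (heq i hi j hj fun x hx => ?_)
    by_contra hxj
    exact disjoint_left.1 hd hx
      (mem_sdiff.2 ⟨hW i hi (mem_union_left _ hx), hxj⟩)
  have choose_pos : (0 : ℚ) < (#W - q).choose a := mod_cast Nat.choose_pos (by lia)
  rw [sum_congr rfl fun i hi => by rw [card_add i hi, hA i hi], sum_const, nsmul_eq_mul,
    ← div_eq_mul_inv, div_le_one choose_pos] at sum_le
  exact_mod_cast sum_le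

end SetPairs

section CompletingCliques

open Finset

variable {V : Type*} {G : SimpleGraph V} {k : ℕ} {e f : Sym2 V} {Q : Finset V} {w : V}

/-- `Q` is a `k`-clique of `G` all of whose vertices are adjacent to both ends of `e`. For a
non-edge `e` of `G`, this says that `Q` and the ends of `e` form a `(k + 2)`-clique once `e` is
added. -/
structure IsCompletingClique (G : SimpleGraph V) (k : ℕ) (e : Sym2 V) (Q : Finset V) : Prop where
  isNClique : G.IsNClique k Q
  adj : ∀ u ∈ e, ∀ q ∈ Q, G.Adj u q

namespace IsCompletingClique

variable [DecidableEq V]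

lemma disjoint (h : IsCompletingClique G k e Q) : Disjoint e.toFinset Q :=
  disjoint_left.2 fun u hu hQ => G.irrefl (h.adj u (Sym2.mem_toFinset.1 hu) u hQ)

lemma erase (h : IsCompletingClique G k e Q) (hw : w ∈ Q) :
    IsCompletingClique G (k - 1) e (Q.erase w) where
  isNClique := h.isNClique.erase_of_mem hw
  adj u hu q hq := h.adj u hu q (mem_of_mem_erase hq)

lemma union_erase_subset_neighborFinset [Fintype (G.neighborSet w)]
    (h : IsCompletingClique G k e Q) (hw : w ∈ Q) :
    e.toFinset ∪ Q.erase w ⊆ G.neighborFinset w := by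
  refine union_subset (fun u hu => ?_) fun q hq => ?_ <;> rw [mem_neighborFinset]
  · exact (h.adj u (Sym2.mem_toFinset.1 hu) w hw).symm
  · exact h.isNClique.isClique hw (mem_of_mem_erase hq) (ne_of_mem_erase hq).symm

lemma eq_of_toFinset_subset_union (h : IsCompletingClique G k e Q) (hf : f ∈ Gᶜ.edgeSet)
    (hsub : f.toFinset ⊆ e.toFinset ∪ Q) : f = e := by
  induction f using Sym2.ind with
  | _ a b =>
  obtain ⟨hab, hnadj⟩ := (G.compl_adj a b).1 hf
  have ha : a ∈ e ∨ a ∈ Q := by simpa using hsub (by simp : a ∈ s(a, b).toFinset)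
  have hb : b ∈ e ∨ b ∈ Q := by simpa using hsub (by simp : b ∈ s(a, b).toFinset)
  rcases ha with ha | ha <;> rcases hb with hb | hb
  · exact ((Sym2.mem_and_mem_iff hab).1 ⟨ha, hb⟩).symm
  · exact absurd (h.adj a ha b hb) hnadj
  · exact absurd (h.adj b hb a ha).symm hnadj
  · exact absurd (h.isNClique.isClique ha hb hab) hnadj

theorem card_le_choose_two {F : Finset (Sym2 V)} {Q : Sym2 V → Finset V} {W : Finset V}
    (hF : ∀ e ∈ F, e ∈ Gᶜ.edgeSet) (hQ : ∀ e ∈ F, IsCompletingClique G k e (Q e))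
    (hW : ∀ e ∈ F, e.toFinset ∪ Q e ⊆ W) : #F ≤ (#W - k).choose 2 :=
  card_le_choose_of_subset_union_imp_eq
    (fun e he => Sym2.card_toFinset_of_not_isDiag e (Gᶜ.not_isDiag_of_mem_edgeSet (hF e he)))
    (fun e he => (hQ e he).isNClique.card_eq) (fun e he => (hQ e he).disjoint) hW
    fun f hf e he => (hQ e he).eq_of_toFinset_subset_union (hF f hf)

end IsCompletingClique

end CompletingCliques

section DegreeBounds

open Finset

variable {V : Type*} {G : SimpleGraph V} {k : ℕ}

namespace IsKSaturated

lemma exists_isCompletingClique (h : IsKSaturated (k + 2) G) {e : Sym2 V}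
    (he : e ∈ Gᶜ.edgeSet) : ∃ Q, IsCompletingClique G k e Q := by
  classical
  induction e using Sym2.ind with
  | _ u v =>
  obtain ⟨huv, hnadj⟩ := (G.compl_adj u v).1 he
  obtain ⟨t, ht⟩ : ∃ t, (G ⊔ edge u v).IsNClique (k + 2) t := by
    simpa only [CliqueFree, not_forall, not_not] using! h.2 u v huv hnadj
  have ht' : (G ⊔ edge v u).IsNClique (k + 2) t := edge_comm u v ▸ ht
  have hu : u ∈ t := h.1.mem_of_sup_edge_isNClique ht
  have hv : v ∈ t := h.1.mem_of_sup_edge_isNClique ht'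
  have clique_u : G.IsNClique (k + 1) (t.erase u) := ht.erase_of_sup_edge_of_mem hu
  have clique_v : G.IsNClique (k + 1) (t.erase v) := ht'.erase_of_sup_edge_of_mem hv
  refine ⟨(t.erase u).erase v, clique_u.erase_of_mem (mem_erase.2 ⟨huv.symm, hv⟩), ?_⟩
  intro x hx q hq
  obtain ⟨hqv, hqu, hqt⟩ : q ≠ v ∧ q ≠ u ∧ q ∈ t := by simpa only [mem_erase] using hq
  obtain rfl | rfl := Sym2.mem_iff.1 hx
  · exact clique_v.isClique (mem_erase.2 ⟨huv, hu⟩) (mem_erase.2 ⟨hqv, hqt⟩) hqu.symm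
  · exact clique_u.isClique (mem_erase.2 ⟨huv.symm, hv⟩) (mem_erase.2 ⟨hqu, hqt⟩) hqv.symm

variable [Fintype V] [DecidableEq V] [DecidableRel G.Adj]

theorem card_compl_edgeFinset_le (h : IsKSaturated (k + 2) G) :
    #Gᶜ.edgeFinset ≤ (Fintype.card V - k).choose 2 := by
  choose! Q hQ using fun e => h.exists_isCompletingClique (e := e)
  exact IsCompletingClique.card_le_choose_two (fun e he => mem_edgeFinset.1 he)
    (fun e he => hQ e (mem_edgeFinset.1 he)) (fun e _ => subset_univ _)

theorem mul_card_compl_edgeFinset_le (h : IsKSaturated (k + 2) G) :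
    k * #Gᶜ.edgeFinset ≤ ∑ w, (G.degree w - (k - 1)).choose 2 := by
  choose! Q hQ using fun e => h.exists_isCompletingClique (e := e)
  calc k * #Gᶜ.edgeFinset = ∑ e ∈ Gᶜ.edgeFinset, #{w | w ∈ Q e} := by
        rw [mul_comm, ← smul_eq_mul, ← sum_const]
        refine sum_congr rfl fun e he => ?_
        rw [filter_univ_mem, (hQ e (mem_edgeFinset.1 he)).isNClique.card_eq]
    _ = ∑ w, #{e ∈ Gᶜ.edgeFinset | w ∈ Q e} :=
        sum_card_bipartiteAbove_eq_sum_card_bipartiteBelow fun e w => w ∈ Q e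
    _ ≤ ∑ w, (G.degree w - (k - 1)).choose 2 := sum_le_sum fun w _ => by
        have hmem : ∀ e ∈ Gᶜ.edgeFinset.filter (w ∈ Q ·), e ∈ Gᶜ.edgeSet ∧ w ∈ Q e :=
          fun e he => (mem_filter.1 he).imp_left mem_edgeFinset.1
        exact IsCompletingClique.card_le_choose_two (fun e he => (hmem e he).1)
          (fun e he => (hQ e (hmem e he).1).erase (hmem e he).2)
          fun e he => (hQ e (hmem e he).1).union_erase_subset_neighborFinset (hmem e he).2

end IsKSaturated

lemma card_edgeFinset_add_card_compl_edgeFinset [Fintype V] [DecidableEq V] (G : SimpleGraph V)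
    [DecidableRel G.Adj] :
    #G.edgeFinset + #Gᶜ.edgeFinset = (Fintype.card V).choose 2 := by
  rw [← card_edgeFinset_top_eq_card_choose_two, ← card_union_of_disjoint
    (disjoint_edgeFinset.2 isCompl_compl.disjoint), ← edgeFinset_sup]
  exact congrArg card (edgeFinset_inj.2 sup_compl_eq_top)

lemma sum_degree_eq_sub_card_compl_edgeFinset [Fintype V] [DecidableEq V] (G : SimpleGraph V)
    [DecidableRel G.Adj] :
    ∑ v, (G.degree v : ℝ)
      = Fintype.card V * (Fintype.card V - 1) - 2 * #Gᶜ.edgeFinset := by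
  have card_add : (#G.edgeFinset + #Gᶜ.edgeFinset : ℝ)
      = Fintype.card V * (Fintype.card V - 1) / 2 := by
    rw [← Nat.cast_choose_two]
    exact_mod_cast card_edgeFinset_add_card_compl_edgeFinset G
  have sum_degree : ∑ v, (G.degree v : ℝ) = 2 * #G.edgeFinset :=
    mod_cast G.sum_degrees_eq_twice_card_edges
  linarith

lemma two_mul_choose_two_sub_le (a b : ℕ) :
    2 * ((a - b).choose 2 : ℝ) ≤ ((a : ℝ) - b) * (a - b - 1) := by
  obtain hba | hab := le_total b a
  · rw [Nat.cast_choose_two, Nat.cast_sub hba]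
    linarith
  · have : (a : ℝ) ≤ b := mod_cast hab
    rw [Nat.sub_eq_zero_of_le hab, Nat.choose_zero_succ, Nat.cast_zero, mul_zero]
    exact mul_nonneg_of_nonpos_of_nonpos (by linarith) (by linarith)

theorem IsKSaturated.le_sum_degree_sq [Fintype V] [DecidableRel G.Adj]
    (h : IsKSaturated (k + 2) G) (hk : 1 ≤ k) :
    ((Fintype.card V : ℝ) - 1) ^ 2 * k + k ^ 2 * (Fintype.card V - k)
      ≤ ∑ v, (G.degree v : ℝ) ^ 2 := by
  classical
  set n := Fintype.card V
  set m := #Gᶜ.edgeFinset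
  have hk' : (0 : ℝ) ≤ k - 1 := sub_nonneg.2 (mod_cast hk)
  have edge_bound : 2 * (m : ℝ) ≤ (n - k) * (n - k - 1) :=
    le_trans (by gcongr; exact h.card_compl_edgeFinset_le) (two_mul_choose_two_sub_le n k)
  have local_bound : 2 * (k * m : ℝ) ≤ ∑ v, (G.degree v : ℝ) ^ 2
      - (2 * k - 1) * ∑ v, (G.degree v : ℝ) + n * (k * (k - 1)) :=
    calc 2 * (k * m : ℝ) ≤ 2 * ∑ v, ((G.degree v - (k - 1)).choose 2 : ℝ) := by
          gcongr
          exact_mod_cast h.mul_card_compl_edgeFinset_le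
      _ ≤ ∑ v, ((G.degree v : ℝ) - (k - 1)) * (G.degree v - (k - 1) - 1) := by
          rw [mul_sum]
          refine sum_le_sum fun v _ => ?_
          simpa only [Nat.cast_pred hk] using two_mul_choose_two_sub_le (G.degree v) (k - 1)
      _ = _ := by
          rw [mul_sum, ← sum_sub_distrib, ← nsmul_eq_mul, show n = #(univ : Finset V) from rfl,
            ← sum_const, ← sum_add_distrib]
          exact sum_congr rfl fun v _ => by ring
  rw [sum_degree_eq_sub_card_compl_edgeFinset] at local_bound
  linarith [mul_le_mul_of_nonneg_left edge_bound hk']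

end DegreeBounds

section Spectral

open Matrix

variable {n : Type*} [Fintype n] [DecidableEq n]

section RCLike

variable {𝕜 : Type*} [RCLike 𝕜] {A : Matrix n n 𝕜}

lemma toEuclideanLin_eigenvectorBasis (hA : A.IsHermitian) (i : n) :
    toEuclideanLin A (hA.eigenvectorBasis i)
      = (hA.eigenvalues i : 𝕜) • hA.eigenvectorBasis i := by
  rw [toLpLin_apply, hA.mulVec_eigenvectorBasis, ← RCLike.real_smul_eq_coe_smul]
  rfl

lemma inner_eigenvectorBasis_toEuclideanLin (hA : A.IsHermitian) (i : n)
    (x : EuclideanSpace 𝕜 n) :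
    inner 𝕜 (hA.eigenvectorBasis i) (toEuclideanLin A x)
      = hA.eigenvalues i * inner 𝕜 (hA.eigenvectorBasis i) x := by
  rw [← isSymmetric_toEuclideanLin_iff.2 hA, toEuclideanLin_eigenvectorBasis, inner_smul_left,
    RCLike.conj_ofReal]

lemma re_inner_toEuclideanLin_le (hA : A.IsHermitian) {c : ℝ} (hc : ∀ i, hA.eigenvalues i ≤ c)
    (x : EuclideanSpace 𝕜 n) : RCLike.re (inner 𝕜 x (toEuclideanLin A x)) ≤ c * ‖x‖ ^ 2 := by
  rw [← hA.eigenvectorBasis.sum_inner_mul_inner, ← hA.eigenvectorBasis.sum_sq_norm_inner_right,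
    Finset.mul_sum, map_sum]
  refine Finset.sum_le_sum fun i _ => ?_
  rw [inner_eigenvectorBasis_toEuclideanLin, mul_left_comm, RCLike.re_ofReal_mul,
    inner_mul_symm_re_eq_norm, norm_mul, norm_inner_symm, ← sq]
  gcongr
  exact hc i

lemma norm_toEuclideanLin_sq_le (hA : A.IsHermitian) {c : ℝ}
    (hc : ∀ i, |hA.eigenvalues i| ≤ c) (x : EuclideanSpace 𝕜 n) :
    ‖toEuclideanLin A x‖ ^ 2 ≤ c ^ 2 * ‖x‖ ^ 2 := by
  rw [← hA.eigenvectorBasis.sum_sq_norm_inner_right, ← hA.eigenvectorBasis.sum_sq_norm_inner_right,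
    Finset.mul_sum]
  refine Finset.sum_le_sum fun i _ => ?_
  rw [inner_eigenvectorBasis_toEuclideanLin, norm_mul, mul_pow, RCLike.norm_ofReal]
  gcongr
  exact hc i

end RCLike

lemma abs_eigenvalues_le_of_entries_nonneg {A : Matrix n n ℝ} (hA : A.IsHermitian)
    (hnonneg : ∀ i j, 0 ≤ A i j) {c : ℝ} (hc : ∀ i, hA.eigenvalues i ≤ c) (i : n) :
    |hA.eigenvalues i| ≤ c := by
  set v := hA.eigenvectorBasis i
  let absv : EuclideanSpace ℝ n := WithLp.toLp 2 fun j => |v j|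
  have norm_v : ‖v‖ = 1 := hA.eigenvectorBasis.norm_eq_one i
  have norm_absv : ‖absv‖ ^ 2 = 1 := by
    rw [← one_pow 2, ← norm_v, EuclideanSpace.real_norm_sq_eq, EuclideanSpace.real_norm_sq_eq]
    exact Finset.sum_congr rfl fun j _ => sq_abs (v j)
  have inner_eq_sum : ∀ x : EuclideanSpace ℝ n,
      inner ℝ x (toEuclideanLin A x) = ∑ j, ∑ k, A j k * (x j * x k) := fun x => by
    simp only [PiLp.inner_apply, toLpLin_apply, mulVec, dotProduct, RCLike.inner_apply,
      conj_trivial, Finset.sum_mul]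
    exact Finset.sum_congr rfl fun j _ => Finset.sum_congr rfl fun k _ => by ring
  calc |hA.eigenvalues i| = |inner ℝ v (toEuclideanLin A v)| := by
        rw [inner_eigenvectorBasis_toEuclideanLin, real_inner_self_eq_norm_sq, norm_v]
        simp
    _ ≤ ∑ j, ∑ k, |A j k * (v j * v k)| := by
        rw [inner_eq_sum]
        exact (Finset.abs_sum_le_sum_abs _ _).trans
          (Finset.sum_le_sum fun j _ => Finset.abs_sum_le_sum_abs _ _)
    _ = inner ℝ absv (toEuclideanLin A absv) := by
        simp only [inner_eq_sum, abs_mul, abs_of_nonneg (hnonneg _ _), absv]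
    _ ≤ c := by simpa [norm_absv] using re_inner_toEuclideanLin_le hA hc absv

end Spectral

theorem sum_degree_sq_le {V : Type*} [Fintype V] [DecidableEq V] {G : SimpleGraph V}
    [DecidableRel G.Adj] (hA : (G.adjMatrix ℝ).IsHermitian) {c : ℝ}
    (hc : ∀ i, |hA.eigenvalues i| ≤ c) :
    ∑ v, (G.degree v : ℝ) ^ 2 ≤ c ^ 2 * Fintype.card V := by
  have := norm_toEuclideanLin_sq_le hA hc (WithLp.toLp 2 fun _ => 1)
  simpa [EuclideanSpace.real_norm_sq_eq, Matrix.toLpLin_apply] using this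

theorem stmt_4 {V : Type*} [Fintype V] [DecidableEq V] (r n : ℕ) (hr : 2 ≤ r)
    (hrn : r < n) (hcard : Fintype.card V = n)
    (G : SimpleGraph V) [DecidableRel G.Adj] (hsat : IsKSaturated (r + 1) G)
    (hA : (G.adjMatrix ℝ).IsHermitian)
    (lam : ℝ) (hlam : IsGreatest (Set.range hA.eigenvalues) lam) :
    lam ≥ Real.sqrt
      ((((n : ℝ) - 1) ^ 2 * ((r : ℝ) - 1) + ((r : ℝ) - 1) ^ 2 * ((n : ℝ) - (r : ℝ) + 1)) / n) := by
  obtain ⟨k, rfl⟩ : ∃ k, r = k + 1 := ⟨r - 1, by lia⟩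
  have abs_le : ∀ i, |hA.eigenvalues i| ≤ lam :=
    abs_eigenvalues_le_of_entries_nonneg hA (fun u v => by rw [adjMatrix_apply]; positivity)
      fun i => hlam.2 ⟨i, rfl⟩
  have lower := hsat.le_sum_degree_sq (Nat.le_of_succ_le_succ hr)
  have upper := sum_degree_sq_le hA abs_le
  have hlam₀ : 0 ≤ lam := by
    obtain ⟨i, -⟩ := hlam.1
    exact (abs_nonneg _).trans (abs_le i)
  have hn : (0 : ℝ) < n := mod_cast pos_of_gt hrn
  rw [hcard] at lower upper
  refine Real.sqrt_le_iff.2 ⟨hlam₀, (div_le_iff₀ hn).2 (le_trans ?_ upper)⟩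
  refine le_of_eq_of_le ?_ lower
  push_cast
  ring
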